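/- Let H ∈ (0, 1/2), let δ ∈ (0, min(1, 1/H − 2)), let 0 < a < T and R > 0. There exists a constant C > 0, depending only on H, δ, a, T, R, such that for all r ∈ (0, R], the double time integral satisfies ∫_a^T ∫_a^T min( r |s − u|^{−2H}, r² |s − u|^{−3H} ) du ds ≤ C r^{1+δ}. -/

import Mathlib

open MeasureTheory

/-!
A minimum is at most any weighted geometric mean, so weights `1 - δ` and `δ` give
`min (r |x| ^ (-2H)) (r ^ 2 |x| ^ (-3H)) ≤ r ^ (1 + δ) |x| ^ (-(2 + δ) H)`.
As `(2 + δ) H < 1`, the right-hand side is integrable near the diagonal `x = s - u = 0`.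
-/

open scoped Pointwise ENNReal

lemma min_le_rpow_mul_rpow {a b θ : ℝ} (ha : 0 ≤ a) (hb : 0 ≤ b) (hθ : θ ∈ Set.Icc 0 1) :
    min a b ≤ a ^ (1 - θ) * b ^ θ := by
  have hmin : 0 ≤ min a b := le_min ha hb
  calc min a b = min a b ^ (1 - θ) * min a b ^ θ := by
        rw [← Real.rpow_add' hmin (by simp), sub_add_cancel, Real.rpow_one]
    _ ≤ a ^ (1 - θ) * b ^ θ := by
        gcongr
        exacts [sub_nonneg.2 hθ.2, min_le_left a b, hθ.1, min_le_right a b]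

lemma min_mul_rpow_le {r x δ : ℝ} (α β : ℝ) (hr : 0 ≤ r) (hx : 0 ≤ x) (hδ : δ ∈ Set.Icc 0 1) :
    min (r * x ^ (-α)) (r ^ 2 * x ^ (-β)) ≤
      r ^ (1 + δ) * x ^ (-((1 - δ) * α + δ * β)) := by
  calc min (r * x ^ (-α)) (r ^ 2 * x ^ (-β))
      ≤ (r * x ^ (-α)) ^ (1 - δ) * (r ^ 2 * x ^ (-β)) ^ δ :=
        min_le_rpow_mul_rpow (by positivity) (by positivity) hδ
    _ = (r ^ (1 - δ) * r ^ (2 * δ)) * (x ^ (-α * (1 - δ)) * x ^ (-β * δ)) := by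
        rw [Real.mul_rpow hr (by positivity), Real.mul_rpow (by positivity) (by positivity),
          ← Real.rpow_natCast_mul hr, ← Real.rpow_mul hx, ← Real.rpow_mul hx, mul_mul_mul_comm,
          Nat.cast_ofNat]
    _ ≤ r ^ (1 - δ + 2 * δ) * x ^ (-α * (1 - δ) + -β * δ) := by
        gcongr
        exacts [Real.le_rpow_add hr _ _, Real.le_rpow_add hx _ _]
    _ = r ^ (1 + δ) * x ^ (-((1 - δ) * α + δ * β)) := by ring_nf

lemma setLIntegral_setLIntegral_sub_le {G : Type*} [AddGroup G] [MeasurableSpace G]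
    [MeasurableAdd G] [MeasurableNeg G] {μ : Measure G} [μ.IsAddLeftInvariant] [μ.IsNegInvariant]
    {A B : Set G} (hA : MeasurableSet A) (hB : MeasurableSet B) (f : G → ℝ≥0∞) :
    ∫⁻ s in A, ∫⁻ u in B, f (s - u) ∂μ ∂μ ≤ (∫⁻ x in A - B, f x ∂μ) * μ A := by
  have inner_le : ∀ s ∈ A, ∫⁻ u in B, f (s - u) ∂μ ≤ ∫⁻ x in A - B, f x ∂μ := fun s hs ↦
    calc ∫⁻ u in B, f (s - u) ∂μ
        ≤ ∫⁻ u in B, (A - B).indicator f (s - u) ∂μ :=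
          setLIntegral_mono' hB fun u hu ↦
            (Set.indicator_of_mem (Set.sub_mem_sub hs hu) f).ge
      _ ≤ ∫⁻ u, (A - B).indicator f (s - u) ∂μ := setLIntegral_le_lintegral _ _
      _ = ∫⁻ x, (A - B).indicator f x ∂μ := lintegral_sub_left_eq_self _ s
      _ ≤ ∫⁻ x in A - B, f x ∂μ := lintegral_indicator_le f _
  calc ∫⁻ s in A, ∫⁻ u in B, f (s - u) ∂μ ∂μ
      ≤ ∫⁻ _ in A, ∫⁻ x in A - B, f x ∂μ ∂μ := setLIntegral_mono' hA inner_le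
    _ = (∫⁻ x in A - B, f x ∂μ) * μ A := setLIntegral_const _ _

section FiniteDimensional

variable {E : Type*} [NormedAddCommGroup E] [NormedSpace ℝ E] [FiniteDimensional ℝ E]
  [Nontrivial E] [MeasurableSpace E] [BorelSpace E] (μ : Measure E) [μ.IsAddHaarMeasure]
  {S : Set E}

lemma setLIntegral_norm_rpow_neg_lt_top {p : ℝ} (hp : p < Module.finrank ℝ E)
    (hS : Bornology.IsBounded S) : ∫⁻ x in S, ENNReal.ofReal (‖x‖ ^ (-p)) ∂μ < ∞ := by
  obtain ⟨ρ, hSρ⟩ := hS.subset_ball 0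
  have integrable_ball : IntegrableOn (fun x : E ↦ ‖x‖ ^ (-p)) (Metric.ball 0 ρ) μ :=
    integrableOn_ball_of_norm_le_rpow (C := 1) Module.finrank_pos hp
      (.of_forall fun x ↦ by rw [one_mul, Real.norm_of_nonneg (by positivity)])
      (measurable_norm.pow_const _).aestronglyMeasurable
  exact (integrable_ball.mono_set hSρ).lintegral_lt_top

lemma setLIntegral_setLIntegral_norm_sub_rpow_neg_lt_top {p : ℝ} (hp : p < Module.finrank ℝ E)
    (hS : Bornology.IsBounded S) (hSm : MeasurableSet S) :
    ∫⁻ s in S, ∫⁻ u in S, ENNReal.ofReal (‖s - u‖ ^ (-p)) ∂μ ∂μ < ∞ :=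
  (setLIntegral_setLIntegral_sub_le hSm hSm fun x ↦ ENNReal.ofReal (‖x‖ ^ (-p))).trans_lt <|
    ENNReal.mul_lt_top (setLIntegral_norm_rpow_neg_lt_top μ hp (isBounded_sub hS hS))
      hS.measure_lt_top

theorem stmt_5_general {α β δ : ℝ} (hδ : δ ∈ Set.Icc 0 1)
    (hαβ : (1 - δ) * α + δ * β < Module.finrank ℝ E)
    (hS : Bornology.IsBounded S) (hSm : MeasurableSet S) :
    ∃ C : ℝ, 0 < C ∧ ∀ r : ℝ, 0 ≤ r →
      ∫⁻ s in S, ∫⁻ u in S,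
        ENNReal.ofReal (min (r * ‖s - u‖ ^ (-α)) (r ^ 2 * ‖s - u‖ ^ (-β))) ∂μ ∂μ ≤
      ENNReal.ofReal (C * r ^ (1 + δ)) := by
  set p := (1 - δ) * α + δ * β
  set K := ∫⁻ s in S, ∫⁻ u in S, ENNReal.ofReal (‖s - u‖ ^ (-p)) ∂μ ∂μ
  have hK : K < ∞ := setLIntegral_setLIntegral_norm_sub_rpow_neg_lt_top μ hαβ hS hSm
  refine ⟨K.toReal + 1, by positivity, fun r hr ↦ ?_⟩
  calc ∫⁻ s in S, ∫⁻ u in S,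
        ENNReal.ofReal (min (r * ‖s - u‖ ^ (-α)) (r ^ 2 * ‖s - u‖ ^ (-β))) ∂μ ∂μ
      ≤ ∫⁻ s in S, ∫⁻ u in S,
          ENNReal.ofReal (r ^ (1 + δ)) * ENNReal.ofReal (‖s - u‖ ^ (-p)) ∂μ ∂μ := by
        gcongr with s u
        rw [← ENNReal.ofReal_mul (by positivity)]
        exact ENNReal.ofReal_le_ofReal (min_mul_rpow_le α β hr (norm_nonneg _) hδ)
    _ = K * ENNReal.ofReal (r ^ (1 + δ)) := by
        simp only [lintegral_const_mul' _ _ ENNReal.ofReal_ne_top, K, mul_comm]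
    _ ≤ ENNReal.ofReal (K.toReal + 1) * ENNReal.ofReal (r ^ (1 + δ)) := by
        gcongr
        exact (ENNReal.le_ofReal_iff_toReal_le hK.ne (by positivity)).2 (by linarith)
    _ = ENNReal.ofReal ((K.toReal + 1) * r ^ (1 + δ)) :=
        (ENNReal.ofReal_mul (by positivity)).symm

end FiniteDimensional

/-- For `H ∈ (0,1/2)` and `δ ∈ (0, min(1, 1/H - 2))`, there is `C > 0` depending only on
`H, δ, a, T, R`, such that for all `r ∈ (0, R]`,
`∫_a^T ∫_a^T min(r |s-u|^{-2H}, r² |s-u|^{-3H}) du ds ≤ C r^{1+δ}`. -/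
theorem stmt_5 (H δ a T R : ℝ) (hH0 : 0 < H) (hH : H < 1 / 2)
    (hδ0 : 0 < δ) (hδ : δ < min 1 (1 / H - 2)) (ha : 0 < a) (haT : a < T) (hR : 0 < R) :
    ∃ C : ℝ, 0 < C ∧ ∀ r : ℝ, 0 < r → r ≤ R →
      ∫⁻ s in Set.Icc a T, ∫⁻ u in Set.Icc a T,
        ENNReal.ofReal (min (r * |s - u| ^ (-(2 * H))) (r ^ 2 * |s - u| ^ (-(3 * H)))) ≤
      ENNReal.ofReal (C * r ^ (1 + δ)) := by
  obtain ⟨hδ1, hδH⟩ := lt_min_iff.1 hδ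
  have exponent_lt : (1 - δ) * (2 * H) + δ * (3 * H) < Module.finrank ℝ ℝ := by
    have : (2 + δ) * H < 1 := (lt_div_iff₀ hH0).1 (by linarith)
    rw [Module.finrank_self, Nat.cast_one]
    linarith
  obtain ⟨C, hC, hbound⟩ := stmt_5_general volume ⟨hδ0.le, hδ1.le⟩ exponent_lt
    (Metric.isBounded_Icc a T) measurableSet_Icc
  exact ⟨C, hC, fun r hr _ ↦ hbound r hr.le⟩
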